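/- Let X be a real random variable taking strictly positive values, and let k, l be non-negative integers with k + l > 2. If D_k and D_l are independent random variables distributed respectively like k⊙X and l⊙X, then Pr(D_k = D_l) = 0; that is, the two walkers end at exactly the same distance from the origin with probability zero. -/

import Mathlib

open MeasureTheory ProbabilityTheory
open scoped ENNReal

/-- The unit vector in the plane with direction angle `θ`. -/
noncomputable def stepVec (θ : ℝ) : EuclideanSpace ℝ (Fin 2) :=
  (WithLp.equiv 2 (Fin 2 → ℝ)).symm ![Real.cos θ, Real.sin θ]

/-- The uniform probability distribution on the unit circle of the plane. -/
noncomputable def uniformCircle : Measure (EuclideanSpace ℝ (Fin 2)) :=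
  Measure.map stepVec
    ((ENNReal.ofReal (2 * Real.pi))⁻¹ • volume.restrict (Set.Ioc 0 (2 * Real.pi)))

/-- The distribution of `n ⊙ X`: the distance from the origin after `n` independent
steps whose lengths are i.i.d. with law `μ` and whose directions are i.i.d. uniform
on the unit circle, all independent. -/
noncomputable def walkDist (μ : Measure ℝ) (n : ℕ) : Measure ℝ :=
  Measure.map
    (fun p : (Fin n → ℝ) × (Fin n → EuclideanSpace ℝ (Fin 2)) => ‖∑ i, p.1 i • p.2 i‖)
    ((Measure.pi fun _ => μ).prod (Measure.pi fun _ => uniformCircle))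


/-!
Condition on the step lengths and on all directions but one. If the remaining step has length
`x ≠ 0` and direction `u`, and the other steps sum to `v`, then
`‖x • u + v‖² = x² + 2 x ⟪v, u⟫ + ‖v‖²`, so when `v ≠ 0` the final distance takes a given value only
if `u` lies on one particular line orthogonal to `v`. A line meets the circle in at most two points,
so this has probability zero. For a walk of at least two steps `v ≠ 0` almost surely, because single
points of the circle are null, and hence the distance from the origin has an atomless law. Since
`k + l > 2`, one of the two walkers makes at least two steps, and a random variable with an atomless
law almost surely avoids any independent random variable.
-/

section ProductMeasures

lemma ae_pi_iff_ae_ae_insertNth {n : ℕ} {α : Fin (n + 1) → Type*} [∀ i, MeasurableSpace (α i)]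
    (μ : ∀ i, Measure (α i)) [∀ i, SigmaFinite (μ i)] (i : Fin (n + 1)) {p : (∀ i, α i) → Prop}
    (hp : MeasurableSet {x | p x}) :
    (∀ᵐ x ∂Measure.pi μ, p x) ↔
      ∀ᵐ w ∂Measure.pi fun j => μ (i.succAbove j), ∀ᵐ u ∂μ i, p (i.insertNth u w) := by
  let e := (MeasurableEquiv.piFinSuccAbove α i).symm
  have he : MeasurePreserving e ((μ i).prod (Measure.pi fun j => μ (i.succAbove j)))
      (Measure.pi μ) :=
    (measurePreserving_piFinSuccAbove μ i).symm
  have hpe : MeasurableSet {z | p (e z)} := e.measurable hp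
  rw [← he.map_eq, ae_map_iff e.measurable.aemeasurable hp, Measure.ae_prod_iff_ae_ae hpe,
    Measure.ae_ae_comm hpe]
  rfl

lemma ae_ne_of_indepFun {Ω α : Type*} [MeasurableSpace Ω] [MeasurableSpace α]
    [MeasurableEq α] {P : Measure Ω} [IsFiniteMeasure P] {Y Z : Ω → α}
    [NullSingletonClass (P.map Y)] (hY : AEMeasurable Y P) (hZ : AEMeasurable Z P)
    (hYZ : IndepFun Y Z P) : ∀ᵐ ω ∂P, Y ω ≠ Z ω := by
  have hne : MeasurableSet {p : α × α | p.1 ≠ p.2} := measurableSet_diagonal.compl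
  have hprod : ∀ᵐ p ∂(P.map Y).prod (P.map Z), p.1 ≠ p.2 := by
    rw [Measure.ae_prod_iff_ae_ae hne, Measure.ae_ae_comm hne]
    exact .of_forall fun z => Measure.ae_ne (P.map Y) z
  rwa [← hYZ.map_prod_eq_prod_map_map hY hZ, ae_map_iff (hY.prodMk hZ) hne] at hprod

end ProductMeasures

section RandomSteps

open scoped InnerProductSpace

variable {E : Type*} [NormedAddCommGroup E] [MeasurableSpace E]

lemma ae_sum_smul_ne [NormedSpace ℝ E] [BorelSpace E] [SecondCountableTopology E]
    {ν : Measure E} [SigmaFinite ν] [NullSingletonClass ν] {n : ℕ} {x : Fin n → ℝ} {i : Fin n}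
    (hi : x i ≠ 0) (v : E) : ∀ᵐ u ∂Measure.pi fun _ : Fin n => ν, ∑ m, x m • u m ≠ v := by
  obtain _ | n := n
  · exact i.elim0
  have hmeas : MeasurableSet {u : Fin (n + 1) → E | ∑ m, x m • u m ≠ v} :=
    (measurableSet_eq_fun (by fun_prop) measurable_const).compl
  rw [ae_pi_iff_ae_ae_insertNth _ i hmeas]
  refine .of_forall fun w => ?_
  filter_upwards [Measure.ae_ne ν ((x i)⁻¹ • (v - ∑ m, x (i.succAbove m) • w m))] with u hu hsum
  rw [Fin.sum_univ_succAbove _ i] at hsum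
  simp only [Fin.insertNth_apply_same, Fin.insertNth_apply_succAbove] at hsum
  exact hu ((eq_inv_smul_iff₀ hi).2 (eq_sub_of_add_eq hsum))

variable [InnerProductSpace ℝ E]

/-- The measure `ν` gives zero mass to every affine hyperplane `{u | ⟪v, u⟫ = c}`, `v ≠ 0`. This is
the only property of the step directions, besides having unit length, that the argument needs. -/
def NullOnHyperplanes (ν : Measure E) : Prop :=
  ∀ v : E, v ≠ 0 → ∀ c : ℝ, ∀ᵐ u ∂ν, ⟪v, u⟫_ℝ ≠ c

namespace NullOnHyperplanes

variable {ν : Measure E}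

lemma nullSingletonClass [Nontrivial E] (hν : NullOnHyperplanes ν) : NullSingletonClass ν where
  measure_singleton a := by
    obtain ⟨v, hv⟩ := exists_ne (0 : E)
    refine measure_mono_null ?_ (ae_iff.1 (hν v hv ⟪v, a⟫_ℝ))
    simp

lemma ae_norm_smul_add_ne (hν : NullOnHyperplanes ν) (hunit : ∀ᵐ u ∂ν, ‖u‖ = 1)
    {x : ℝ} (hx : x ≠ 0) {v : E} (hv : v ≠ 0) (c : ℝ) : ∀ᵐ u ∂ν, ‖x • u + v‖ ≠ c := by
  filter_upwards [hν v hv ((c ^ 2 - x ^ 2 - ‖v‖ ^ 2) / (2 * x)), hunit] with u hu hu_unit hc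
  have hsq : c ^ 2 = x ^ 2 + 2 * (x * ⟪v, u⟫_ℝ) + ‖v‖ ^ 2 := by
    rw [← hc, norm_add_sq_real, norm_smul, hu_unit, mul_one, Real.norm_eq_abs, sq_abs,
      real_inner_smul_left, real_inner_comm]
  refine hu ((eq_div_iff (by positivity)).2 ?_)
  linear_combination -hsq

lemma ae_norm_sum_smul_ne [Nontrivial E] [BorelSpace E] [SecondCountableTopology E] [SigmaFinite ν]
    (hν : NullOnHyperplanes ν) (hunit : ∀ᵐ u ∂ν, ‖u‖ = 1) {n : ℕ} {x : Fin n → ℝ} {i j : Fin n}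
    (hij : i ≠ j) (hi : x i ≠ 0) (hj : x j ≠ 0) (c : ℝ) :
    ∀ᵐ u ∂Measure.pi fun _ : Fin n => ν, ‖∑ m, x m • u m‖ ≠ c := by
  obtain _ | n := n
  · exact i.elim0
  have := hν.nullSingletonClass
  obtain ⟨j, rfl⟩ := Fin.exists_succAbove_eq hij.symm
  have hmeas : MeasurableSet {u : Fin (n + 1) → E | ‖∑ m, x m • u m‖ ≠ c} :=
    (measurableSet_eq_fun (by fun_prop) measurable_const).compl
  rw [ae_pi_iff_ae_ae_insertNth _ i hmeas]
  filter_upwards [ae_sum_smul_ne (x := fun m => x (i.succAbove m)) hj (0 : E)] with w hw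
  simpa only [Fin.sum_univ_succAbove _ i, Fin.insertNth_apply_same, Fin.insertNth_apply_succAbove]
    using hν.ae_norm_smul_add_ne hunit hi hw c

end NullOnHyperplanes

end RandomSteps

section UniformCircle

open scoped InnerProductSpace

lemma measurable_stepVec : Measurable stepVec := by
  refine (PiLp.continuous_toLp 2 _).measurable.comp (measurable_pi_lambda _ fun i => ?_)
  fin_cases i
  exacts [Real.measurable_cos, Real.measurable_sin]

lemma inner_stepVec (φ θ : ℝ) : ⟪stepVec φ, stepVec θ⟫_ℝ = Real.cos (θ - φ) := by
  simp [stepVec, PiLp.inner_apply, Fin.sum_univ_two, Real.cos_sub]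

lemma norm_stepVec (θ : ℝ) : ‖stepVec θ‖ = 1 := by
  rw [norm_eq_sqrt_real_inner, inner_stepVec, sub_self, Real.cos_zero, Real.sqrt_one]

lemma exists_eq_norm_smul_stepVec (v : EuclideanSpace ℝ (Fin 2)) : ∃ φ, v = ‖v‖ • stepVec φ := by
  let z : ℂ := ⟨v 0, v 1⟩
  have hz : ‖z‖ = ‖v‖ := by
    simp [z, Complex.norm_eq_sqrt_sq_add_sq, EuclideanSpace.norm_eq, Fin.sum_univ_two]
  refine ⟨z.arg, ?_⟩
  ext i
  fin_cases i
  · simpa [stepVec, hz] using (Complex.norm_mul_cos_arg z).symm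
  · simpa [stepVec, hz] using (Complex.norm_mul_sin_arg z).symm

lemma countable_setOf_cos_eq (a : ℝ) : {θ : ℝ | Real.cos θ = a}.Countable := by
  obtain h | ⟨α, rfl⟩ := {θ : ℝ | Real.cos θ = a}.eq_empty_or_nonempty
  · simp [h]
  have hsub : {θ | Real.cos θ = Real.cos α} ⊆
      ⋃ m : ℤ, {2 * m * Real.pi + α, 2 * m * Real.pi - α} := fun θ hθ =>
    Set.mem_iUnion.2 (Real.cos_eq_cos_iff.1 (Eq.symm hθ))
  exact (Set.countable_iUnion fun m => (Set.toFinite _).countable).mono hsub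

instance isProbabilityMeasure_uniformCircle : IsProbabilityMeasure uniformCircle := by
  refine (Measure.isProbabilityMeasure_map_iff measurable_stepVec.aemeasurable).2 ⟨?_⟩
  rw [Measure.smul_apply, Measure.restrict_apply_univ, Real.volume_Ioc, sub_zero, smul_eq_mul]
  exact ENNReal.inv_mul_cancel (by simp [Real.pi_pos]) ENNReal.ofReal_ne_top

lemma ae_uniformCircle_of_countable {p : EuclideanSpace ℝ (Fin 2) → Prop}
    (hp : MeasurableSet {u | p u}) (hcount : {θ | ¬ p (stepVec θ)}.Countable) :
    ∀ᵐ u ∂uniformCircle, p u := by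
  rw [uniformCircle, ae_map_iff measurable_stepVec.aemeasurable hp]
  exact Measure.ae_smul_measure (hcount.ae_notMem _ |>.mono fun _ => not_not.1) _

lemma ae_norm_eq_one_uniformCircle : ∀ᵐ u ∂uniformCircle, ‖u‖ = 1 :=
  ae_uniformCircle_of_countable (measurableSet_eq_fun measurable_norm measurable_const)
    (by simp [norm_stepVec])

lemma nullOnHyperplanes_uniformCircle : NullOnHyperplanes uniformCircle := by
  intro v hv c
  refine ae_uniformCircle_of_countable
    (measurableSet_eq_fun (by fun_prop) measurable_const).compl ?_
  obtain ⟨φ, hφ⟩ := exists_eq_norm_smul_stepVec v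
  refine ((countable_setOf_cos_eq (c / ‖v‖)).preimage (sub_left_injective (b := φ))).mono ?_
  intro θ hθ
  rw [Set.mem_ofPred_eq, not_not, hφ, real_inner_smul_left, inner_stepVec] at hθ
  exact (eq_div_iff (norm_ne_zero_iff.2 hv)).2 (by rw [← hθ, mul_comm])

end UniformCircle

lemma ae_walkDist_ne {μ : Measure ℝ} [SigmaFinite μ] (hμ : ∀ᵐ x ∂μ, x ≠ 0) {n : ℕ}
    (hn : 2 ≤ n) (c : ℝ) : ∀ᵐ d ∂walkDist μ n, d ≠ c := by
  have hdist : Measurable fun p : (Fin n → ℝ) × (Fin n → EuclideanSpace ℝ (Fin 2)) =>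
      ‖∑ i, p.1 i • p.2 i‖ := by fun_prop
  have hsteps (i : Fin n) : ∀ᵐ x ∂Measure.pi fun _ : Fin n => μ, x i ≠ 0 :=
    (Measure.quasiMeasurePreserving_eval (fun _ => μ) i).ae hμ
  have hne : MeasurableSet {p : (Fin n → ℝ) × (Fin n → EuclideanSpace ℝ (Fin 2)) |
      ‖∑ i, p.1 i • p.2 i‖ ≠ c} := hdist (measurableSet_singleton c).compl
  rw [walkDist, ae_map_iff hdist.aemeasurable (p := (· ≠ c)) (measurableSet_singleton c).compl,
    Measure.ae_prod_iff_ae_ae hne]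
  filter_upwards [hsteps ⟨0, by omega⟩, hsteps ⟨1, by omega⟩] with x hx₀ hx₁
  exact nullOnHyperplanes_uniformCircle.ae_norm_sum_smul_ne ae_norm_eq_one_uniformCircle
    (by simp) hx₀ hx₁ c

lemma nullSingletonClass_walkDist {μ : Measure ℝ} [SigmaFinite μ] (hμ : ∀ᵐ x ∂μ, x ≠ 0) {n : ℕ}
    (hn : 2 ≤ n) : NullSingletonClass (walkDist μ n) where
  measure_singleton c := compl_mem_ae_iff.1 (ae_walkDist_ne hμ hn c)

theorem stmt_5_general {Ω : Type*} [MeasurableSpace Ω] {P : Measure Ω} [IsProbabilityMeasure P]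
    {X : Ω → ℝ} (hX : AEMeasurable X P) (hX_ne : ∀ᵐ ω ∂P, X ω ≠ 0) {n : ℕ} (hn : 2 ≤ n)
    {D Y : Ω → ℝ} (hD : AEMeasurable D P) (hY : AEMeasurable Y P) (hind : IndepFun D Y P)
    (hlaw : P.map D = walkDist (P.map X) n) :
    P {ω | D ω = Y ω} = 0 := by
  have := Measure.isProbabilityMeasure_map hX
  have hmap_ne : ∀ᵐ x ∂P.map X, x ≠ 0 :=
    (ae_map_iff hX (measurableSet_singleton 0).compl).2 hX_ne
  have : NullSingletonClass (P.map D) := hlaw ▸ nullSingletonClass_walkDist hmap_ne hn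
  simpa only [ae_iff, not_not] using ae_ne_of_indepFun hD hY hind

theorem stmt_5 {Ω : Type*} [MeasurableSpace Ω] (P : Measure Ω) [IsProbabilityMeasure P]
    (X : Ω → ℝ) (hX : Measurable X) (hXpos : ∀ ω, 0 < X ω)
    (k l : ℕ) (hkl : 2 < k + l)
    (Dk Dl : Ω → ℝ) (hDk : Measurable Dk) (hDl : Measurable Dl)
    (hind : IndepFun Dk Dl P)
    (hDklaw : Measure.map Dk P = walkDist (Measure.map X P) k)
    (hDllaw : Measure.map Dl P = walkDist (Measure.map X P) l) :
    P {ω | Dk ω = Dl ω} = 0 := by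
  have hX_ne : ∀ᵐ ω ∂P, X ω ≠ 0 := .of_forall fun ω => (hXpos ω).ne'
  obtain hk | hl : 2 ≤ k ∨ 2 ≤ l := by omega
  · exact stmt_5_general hX.aemeasurable hX_ne hk hDk.aemeasurable hDl.aemeasurable hind hDklaw
  · simpa only [eq_comm] using stmt_5_general hX.aemeasurable hX_ne hl hDl.aemeasurable
      hDk.aemeasurable hind.symm hDllaw
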